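/- Let F be a field, α_1,…,α_n distinct nonzero elements of F, and t ≤ d natural numbers. Let C ⊆ {1,…,n} with |C| ≤ t. Let (f_i)_{i∈C} be polynomials over F of degree at most d and (g_i)_{i∈C} polynomials over F of degree at most t satisfying f_i(α_j) = g_j(α_i) for all i, j ∈ C. Then for every polynomial q over F of degree at most d with q(α_i) = g_i(0) for all i ∈ C, there exists a bivariate polynomial F(x,y) over F of degree at most (d,t) such that F(x,0) = q(x), F(x,α_i) = f_i(x) for all i ∈ C, and F(α_i,y) = g_i(y) for all i ∈ C. (This is the extension claim underlying the privacy of sharing a degree-d polynomial q embedded at y = 0 in a random degree-(d,t) bivariate polynomial: the at most t row and column polynomials learnt by the adversary are consistent with every candidate degree-d sharing polynomial.) -/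

import Mathlib

open Polynomial

/-- The bivariate polynomial `∑ u s (x) * v s (y)`. -/
noncomputable def tens {F ι : Type*} [Field F] (S : Finset ι) (u v : ι → F[X]) : F[X][X] :=
  ∑ s ∈ S, Polynomial.C (u s) * (v s).map Polynomial.C

theorem tens_eval {F ι : Type*} [Field F] (S : Finset ι) (u v : ι → F[X]) (a : F) :
    (tens S u v).eval (Polynomial.C a) = ∑ s ∈ S, u s * Polynomial.C ((v s).eval a) := by
  simp [tens, eval_finset_sum, eval_map, eval₂_at_apply]

theorem tens_map {F ι : Type*} [Field F] (S : Finset ι) (u v : ι → F[X]) (a : F) :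
    (tens S u v).map (evalRingHom a) = ∑ s ∈ S, Polynomial.C ((u s).eval a) * v s := by
  have h : (evalRingHom a).comp (Polynomial.C : F →+* F[X]) = RingHom.id F := by
    ext; simp
  simp [tens, Polynomial.map_sum, Polynomial.map_map, h]

theorem tens_coeff {F ι : Type*} [Field F] (S : Finset ι) (u v : ι → F[X]) (d : ℕ)
    (h : ∀ s ∈ S, (u s).natDegree ≤ d) (k : ℕ) : ((tens S u v).coeff k).natDegree ≤ d := by
  rw [tens, finset_sum_coeff]
  refine natDegree_sum_le_of_forall_le _ _ fun s hs => ?_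
  rw [coeff_C_mul, coeff_map]
  exact (natDegree_mul_C_le _ _).trans (h s hs)

theorem tens_deg {F ι : Type*} [Field F] (S : Finset ι) (u v : ι → F[X]) (t : ℕ)
    (h : ∀ s ∈ S, (v s).natDegree ≤ t) : (tens S u v).natDegree ≤ t := by
  refine natDegree_sum_le_of_forall_le _ _ fun s hs => ?_
  exact (natDegree_C_mul_le _ _).trans (natDegree_map_le.trans (h s hs))

theorem lag_sum {F ι : Type*} [Field F] [DecidableEq ι] (S : Finset ι) (β : ι → F)
    (hβ : Function.Injective β) (u : ι → F[X]) (i : ι) (hi : i ∈ S) :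
    ∑ s ∈ S, u s * Polynomial.C ((Lagrange.basis S β s).eval (β i)) = u i := by
  rw [Finset.sum_eq_single i]
  · rw [Lagrange.eval_basis_self hβ.injOn hi]; simp
  · intro b _ hb
    rw [Lagrange.eval_basis_of_ne hb hi]; simp
  · exact fun h => absurd hi h

theorem lag_deg {F ι : Type*} [Field F] [DecidableEq ι] (S : Finset ι) (β : ι → F)
    (hβ : Function.Injective β) (i : ι) (hi : i ∈ S) :
    (Lagrange.basis S β i).natDegree ≤ S.card - 1 :=
  natDegree_le_of_degree_le (Lagrange.degree_basis hβ.injOn hi).le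

/-- Extension lemma for degree-`(d,t)` bivariate sharing with the Shamir polynomial
embedded at `y = 0`: given at most `t` consistent row polynomials `f i` (degree ≤ d) and
column polynomials `g i` (degree ≤ t), every degree-`≤ d` polynomial `q` with
`q (α i) = g i (0)` extends to a bivariate polynomial of degree at most `(d,t)` with
`F(x,0) = q(x)` and the given rows and columns.
A bivariate polynomial `F(x,y)` is represented as `P : Polynomial (Polynomial F)`
(polynomial in `y` with coefficients polynomials in `x`): `F(x, α) = P.eval (C α)`, so in
particular `F(x, 0) = P.eval 0`, and `F(α, y) = P.map (evalRingHom α)`. -/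
theorem stmt_9 (F : Type*) [Field F] (n t d : ℕ) (htd : t ≤ d)
    (α : Fin n → F) (hα : Function.Injective α) (hα0 : ∀ i, α i ≠ 0)
    (Cs : Finset (Fin n)) (hCs : Cs.card ≤ t)
    (f g : Fin n → F[X])
    (hf : ∀ i ∈ Cs, (f i).natDegree ≤ d) (hg : ∀ i ∈ Cs, (g i).natDegree ≤ t)
    (hcons : ∀ i ∈ Cs, ∀ j ∈ Cs, (f i).eval (α j) = (g j).eval (α i))
    (q : F[X]) (hq : q.natDegree ≤ d) (hqv : ∀ i ∈ Cs, q.eval (α i) = (g i).eval 0) :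
    ∃ P : Polynomial (Polynomial F),
      (∀ k, (P.coeff k).natDegree ≤ d) ∧ P.natDegree ≤ t ∧
      P.eval 0 = q ∧
      (∀ i ∈ Cs, P.eval (Polynomial.C (α i)) = f i) ∧
      (∀ i ∈ Cs, P.map (evalRingHom (α i)) = g i) := by
  classical
  set β : Option (Fin n) → F := fun o => o.elim 0 α with hβd
  have hβ : Function.Injective β := by
    rintro (_ | i) (_ | j) h
    · rfl
    · exact absurd h.symm (hα0 j)
    · exact absurd h (hα0 i)
    · exact congrArg some (hα h)
  set S : Finset (Option (Fin n)) := Finset.insertNone Cs with hS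
  have hScard : S.card = Cs.card + 1 := Finset.card_insertNone Cs
  set h : Option (Fin n) → F[X] := fun o => o.elim q f with hh
  set A : F[X][X] := tens S h (Lagrange.basis S β) with hA
  have hLdeg : ∀ s ∈ S, (Lagrange.basis S β s).natDegree ≤ t := fun s hs => by
    have := lag_deg S β hβ s hs
    omega
  have hhdeg : ∀ s ∈ S, (h s).natDegree ≤ d := by
    rintro (_ | i) hs
    · exact hq
    · exact hf i (Finset.some_mem_insertNone.1 hs)
  have hArow : ∀ s ∈ S, A.eval (Polynomial.C (β s)) = h s := fun s hs => by
    rw [hA, tens_eval, lag_sum S β hβ h s hs]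
  set E : Fin n → F[X] := fun i => g i - A.map (evalRingHom (α i)) with hE
  have hAdeg : A.natDegree ≤ t := tens_deg _ _ _ _ hLdeg
  have hEdeg : ∀ i ∈ Cs, (E i).natDegree ≤ t := fun i hi =>
    (natDegree_sub_le _ _).trans (max_le (hg i hi) (natDegree_map_le.trans hAdeg))
  have hmapeval : ∀ a b : F, (A.map (evalRingHom a)).eval b
      = (A.eval (Polynomial.C b)).eval a := fun a b => by
    rw [hA, tens_map, tens_eval]
    simp [eval_finset_sum]
  have hE0 : ∀ i ∈ Cs, ∀ s ∈ S, (E i).eval (β s) = 0 := by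
    intro i hi s hs
    rw [hE]
    simp only [eval_sub]
    rw [hmapeval, hArow s hs, sub_eq_zero]
    rcases s with _ | j
    · exact (hqv i hi).symm
    · exact (hcons j (Finset.some_mem_insertNone.1 hs) i hi).symm
  set B : F[X][X] := tens Cs (Lagrange.basis Cs α) E with hB
  have hBrow : ∀ s ∈ S, B.eval (Polynomial.C (β s)) = 0 := fun s hs => by
    rw [hB, tens_eval]
    refine Finset.sum_eq_zero fun i hi => ?_
    rw [hE0 i hi s hs]; simp
  have hrow : ∀ s ∈ S, (A + B).eval (Polynomial.C (β s)) = h s := fun s hs => by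
    rw [eval_add, hArow s hs, hBrow s hs, add_zero]
  refine ⟨A + B, fun k => ?_, ?_, ?_, ?_, ?_⟩
  · rw [coeff_add]
    refine (natDegree_add_le _ _).trans (max_le (tens_coeff _ _ _ _ hhdeg k)
      (tens_coeff _ _ _ _ (fun i hi => ?_) k))
    have := lag_deg Cs α hα i hi
    omega
  · exact (natDegree_add_le _ _).trans (max_le hAdeg (tens_deg _ _ _ _ hEdeg))
  · have := hrow none (Finset.none_mem_insertNone)
    simpa [hβd, hh] using this
  · intro i hi
    exact hrow (some i) (Finset.some_mem_insertNone.2 hi)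
  · intro i hi
    have hBm : B.map (evalRingHom (α i)) = E i := by
      rw [hB, tens_map]
      simp_rw [mul_comm _ (E _)]
      exact lag_sum Cs α hα E i hi
    rw [Polynomial.map_add, hBm, hE]
    simp
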